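/- arXiv:0805.0330 — 2 statements merged into one kernel-verified Lean document; each statement's English description precedes it below -/
import Mathlib

section
/- For every ATRA₁ 𝒜 with alphabet Σ, there exists an ITCA 𝒞 with alphabet Σ such that L(𝒞) = {tree(τ) : τ ∈ L^fin(𝒜)}, i.e., 𝒞 accepts exactly the finite trees obtained by erasing data from the finite data trees accepted by 𝒜. -/
/-! ## Trees and data trees -/

abbrev Node : Type := List Bool

/-- A (possibly infinite) data tree over alphabet `A`, with data from `ℕ`.
It is represented by the partial labelling functions on nonleaf nodes:
`label n = some a` iff `n` is a nonleaf node labelled `a`, and similarly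
`dlabel` gives the datum at each nonleaf node. -/
structure DataTree (A : Type) where
  label : Node → Option A
  dlabel : Node → Option ℕ
  root_nonleaf : (label []).isSome
  domain_eq : ∀ n : Node, (dlabel n).isSome ↔ (label n).isSome
  tree_cond : ∀ (n : Node) (d : Bool), (label (n ++ [d])).isSome → (label n).isSome

namespace DataTree
variable {A : Type}

def Nonleaf (τ : DataTree A) (n : Node) : Prop := (τ.label n).isSome

/-- The set of nodes: the root together with both children of every nonleaf node. -/
def Nodes (τ : DataTree A) : Set Node :=
  {n | n = [] ∨ ∃ m d, n = m ++ [d] ∧ τ.Nonleaf m}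

def Leaf (τ : DataTree A) (n : Node) : Prop := n ∈ τ.Nodes ∧ ¬ τ.Nonleaf n

def Finite (τ : DataTree A) : Prop := {n | τ.Nonleaf n}.Finite

end DataTree

/-- A (possibly infinite) tree over alphabet `A` (a data tree without data). -/
structure BTree (A : Type) where
  label : Node → Option A
  root_nonleaf : (label []).isSome
  tree_cond : ∀ (n : Node) (d : Bool), (label (n ++ [d])).isSome → (label n).isSome

namespace BTree
variable {A : Type}
def Nonleaf (t : BTree A) (n : Node) : Prop := (t.label n).isSome
def Nodes (t : BTree A) : Set Node :=
  {n | n = [] ∨ ∃ m d, n = m ++ [d] ∧ t.Nonleaf m}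
def Leaf (t : BTree A) (n : Node) : Prop := n ∈ t.Nodes ∧ ¬ t.Nonleaf n
def Finite (t : BTree A) : Prop := {n | t.Nonleaf n}.Finite
end BTree

/-- The underlying tree of a data tree (erasing the data). -/
def DataTree.toTree {A : Type} (τ : DataTree A) : BTree A :=
  ⟨τ.label, τ.root_nonleaf, τ.tree_cond⟩

/-- `τ` and `τ'` have equal `l`-prefixes: they agree on all nodes of length `< l`
(hence their restrictions to nodes of length `≤ l` coincide). -/
def EqPrefix {A : Type} (τ τ' : DataTree A) (l : ℕ) : Prop :=
  ∀ n : Node, n.length < l → τ.label n = τ'.label n ∧ τ.dlabel n = τ'.dlabel n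

open Classical in
/-- The distance between data trees: `0` if they are equal, and otherwise `1/l`
where `l` is least such that the `l`-prefixes are distinct. -/
noncomputable def treeDist {A : Type} (τ τ' : DataTree A) : ℝ :=
  if τ = τ' then 0 else ((sInf {l : ℕ | ¬ EqPrefix τ τ' l} : ℕ) : ℝ)⁻¹

/-! ## Forward alternating tree 1-register automata (ATRA₁) -/

/-- Positive Boolean formulae over `Q`: atoms `q(d, ↓)` / `q(d, ¬↓)` are
`atom q d true` / `atom q d false`, where `d : Bool` is the direction. -/
inductive PosBool (Q : Type) : Type
  | atom : Q → Bool → Bool → PosBool Q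
  | tt : PosBool Q
  | ff : PosBool Q
  | and : PosBool Q → PosBool Q → PosBool Q
  | or : PosBool Q → PosBool Q → PosBool Q

/-- Satisfaction of a positive Boolean formula by a quadruple
`R d u` of subsets of `Q` (`d` = direction, `u = true` means register update `↓`). -/
def PosBool.Sat {Q : Type} (R : Bool → Bool → Set Q) : PosBool Q → Prop
  | .atom q d u => q ∈ R d u
  | .tt => True
  | .ff => False
  | .and φ ψ => φ.Sat R ∧ ψ.Sat R
  | .or φ ψ => φ.Sat R ∨ ψ.Sat R

/-- The dual of a positive Boolean formula: swaps `⊤`/`⊥` and `∧`/`∨`. -/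
def PosBool.dual {Q : Type} : PosBool Q → PosBool Q
  | .atom q d u => .atom q d u
  | .tt => .ff
  | .ff => .tt
  | .and φ ψ => .or φ.dual ψ.dual
  | .or φ ψ => .and φ.dual ψ.dual

def PosBool.map {Q Q' : Type} (f : Q → Q') : PosBool Q → PosBool Q'
  | .atom q d u => .atom (f q) d u
  | .tt => .tt
  | .ff => .ff
  | .and φ ψ => .and (φ.map f) (ψ.map f)
  | .or φ ψ => .or (φ.map f) (ψ.map f)

/-- A forward alternating tree 1-register automaton. -/
structure ATRA (A : Type) where
  Q : Type
  fin : Finite Q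
  qI : Q
  F : Set Q
  δ : Q → A → Bool → PosBool Q

namespace ATRA
variable {A : Type}

/-- The transition relation between configurations (finite sets of threads),
relative to a letter `a` and a datum `E`. -/
def Trans (M : ATRA A) (a : A) (E : ℕ) (G H0 H1 : Set (M.Q × ℕ)) : Prop :=
  ∀ q D, (q, D) ∈ G →
    ∃ R : Bool → Bool → Set M.Q,
      (M.δ q a (decide (D = E))).Sat R ∧
      ∀ d : Bool,
        (∀ r ∈ R d true, (r, E) ∈ (if d then H1 else H0)) ∧
        (∀ r ∈ R d false, (r, D) ∈ (if d then H1 else H0))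

/-- A run of `M` on a data tree `τ`. -/
structure Run (M : ATRA A) (τ : DataTree A) where
  G : Node → Set (M.Q × ℕ)
  finite : ∀ n : Node, (G n).Finite
  support : ∀ n : Node, n ∉ τ.Nodes → G n = ∅
  init : ∃ D : ℕ, τ.dlabel [] = some D ∧ (M.qI, D) ∈ G []
  step : ∀ (n : Node) (a : A) (D : ℕ), τ.label n = some a → τ.dlabel n = some D →
    M.Trans a D (G n) (G (n ++ [false])) (G (n ++ [true]))

def Run.Final {M : ATRA A} {τ : DataTree A} (ρ : M.Run τ) : Prop :=
  ∀ n, τ.Leaf n → ∀ q D, (q, D) ∈ ρ.G n → q ∈ M.F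

def Run.FiniteRun {M : ATRA A} {τ : DataTree A} (ρ : M.Run τ) : Prop :=
  ∃ l : ℕ, ∀ n : Node, l ≤ n.length → ρ.G n = ∅

/-- The language of `M` over finite data trees. -/
def Lfin (M : ATRA A) : Set (DataTree A) :=
  {τ | τ.Finite ∧ ∃ ρ : M.Run τ, ρ.Final}

/-- The safety language of `M`: data trees on which `M` has a final run. -/
def Lsaf (M : ATRA A) : Set (DataTree A) :=
  {τ | ∃ ρ : M.Run τ, ρ.Final}

/-- The co-safety language of `M`: data trees on which `M` has a final finite run. -/
def Lcos (M : ATRA A) : Set (DataTree A) :=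
  {τ | ∃ ρ : M.Run τ, ρ.Final ∧ ρ.FiniteRun}

/-- The dual automaton: final states complemented, transition formulae dualised. -/
def dual (M : ATRA A) : ATRA A :=
  ⟨M.Q, M.fin, M.qI, M.Fᶜ, fun q a b => (M.δ q a b).dual⟩

end ATRA

/-! ## Counters with incrementing errors -/

/-- A counter valuation on `k` counters. -/
abbrev Val (k : ℕ) : Type := Fin k → ℕ

/-- Pointwise order on counter valuations. -/
def ValLE {k : ℕ} (v w : Val k) : Prop := ∀ c, v c ≤ w c

/-- Instructions over `k` counters: increment, decrement, zero-test. -/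
inductive Instr (k : ℕ) : Type
  | inc : Fin k → Instr k
  | dec : Fin k → Instr k
  | ifz : Fin k → Instr k

/-- Error-free steps. -/
def StepExact {k : ℕ} : Instr k → Val k → Val k → Prop
  | .inc c, v, v' => v' = Function.update v c (v c + 1)
  | .dec c, v, v' => 0 < v c ∧ v' = Function.update v c (v c - 1)
  | .ifz c, v, v' => v c = 0 ∧ v' = v

/-- Steps with incrementing errors. -/
def StepErr {k : ℕ} (l : Instr k) (v v' : Val k) : Prop :=
  ∃ vs vs', ValLE v vs ∧ StepExact l vs vs' ∧ ValLE vs' v'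

/-- Lazy steps: either error-free, or a decrement of `0` erroneously yields `0`. -/
def StepLazy {k : ℕ} (l : Instr k) (v v' : Val k) : Prop :=
  StepExact l v v' ∨ ∃ c, l = Instr.dec c ∧ v c = 0 ∧ v' = v

/-! ## Incrementing tree counter automata (ITCA) -/

/-- A forward incrementing tree counter automaton with ε-transitions. -/
structure ITCA (A : Type) where
  Q : Type
  fin : Finite Q
  qI : Q
  F : Set Q
  k : ℕ
  δ : Set (Q × A × Instr k × Q × Q)
  δε : Set (Q × Instr k × Q)

namespace ITCA
variable {A : Type}

/-- A run of `C` on a finite tree: a block (nonempty sequence of configurations,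
consecutive ones related by ε-transitions with incrementing errors) at each node. -/
structure Run (C : ITCA A) (t : BTree A) where
  B : Node → List (C.Q × Val C.k)
  nonempty : ∀ n ∈ t.Nodes, B n ≠ []
  block : ∀ n ∈ t.Nodes,
    List.Chain' (fun x y => ∃ l, (x.1, l, y.1) ∈ C.δε ∧ StepErr l x.2 y.2) (B n)
  init : (B []).head? = some (C.qI, fun _ => 0)
  step : ∀ (n : Node) (a : A), t.label n = some a →
    ∃ q v l r0 r1 w0 w1,
      (B n).getLast? = some (q, v) ∧
      (q, a, l, r0, r1) ∈ C.δ ∧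
      StepErr l v w0 ∧ StepErr l v w1 ∧
      (B (n ++ [false])).head? = some (r0, w0) ∧
      (B (n ++ [true])).head? = some (r1, w1)

def Run.Accepting {C : ITCA A} {t : BTree A} (ρ : C.Run t) : Prop :=
  ∀ n, t.Leaf n → ∀ q v, (ρ.B n).getLast? = some (q, v) → q ∈ C.F

/-- The language of `C`: finite trees on which `C` has an accepting run. -/
def Lang (C : ITCA A) : Set (BTree A) :=
  {t | t.Finite ∧ ∃ ρ : C.Run t, ρ.Accepting}

/-- The transition relation between levels (finite sets of configurations):
each non-final configuration is replaced by the configuration(s) some firable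
transition yields lazily, and final configurations are removed. -/
def LevelStep (C : ITCA A) (G G' : Set (C.Q × Val C.k)) : Prop :=
  ∃ f : C.Q × Val C.k → Set (C.Q × Val C.k),
    (∀ x ∈ G, x.1 ∉ C.F →
      (∃ a l r0 r1 w0 w1, (x.1, a, l, r0, r1) ∈ C.δ ∧
        StepLazy l x.2 w0 ∧ StepLazy l x.2 w1 ∧ f x = {(r0, w0), (r1, w1)}) ∨
      (∃ l r w, (x.1, l, r) ∈ C.δε ∧ StepLazy l x.2 w ∧ f x = {(r, w)})) ∧
    G' = ⋃ x ∈ {y ∈ G | y.1 ∉ C.F}, f x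

end ITCA

/-- The quasi-order on levels: each configuration of `G` is dominated
(same state, pointwise smaller-or-equal valuation) by some configuration of `H`. -/
def LevelLE {Q : Type} {k : ℕ} (G H : Set (Q × Val k)) : Prop :=
  ∀ x ∈ G, ∃ y ∈ H, x.1 = y.1 ∧ ValLE x.2 y.2

/-!
The counter automaton guesses its way down the tree what the alternating automaton does there, but
it remembers each datum only through its profile: the set of states in which the threads carrying
that datum reach the left child, and likewise for the right child. The threads of a datum at a node
are determined by its profile at the parent, and once the profiles at the node itself are known, the
transition formulae can be checked datum by datum. Hence it suffices to count, for each of the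
finitely many profiles, the data having it.

Two banks of counters take turns. At a node, one bank holds the profiles assigned at the parent.
The automaton first removes the datum of the node from it, guessing a new profile for it, and then
moves every other datum to the other bank, guessing its new profile and checking the transition
formulae; zero tests ensure that no datum was left behind. The increment for the datum of the node
is deferred to the branching transition. What a node demands of its threads is guessed as an element
of a finite set independent of the alphabet and compared with the label of the node at the end.

Incrementing errors are harmless: they only add phantom data, whose threads make further demands, so
that discarding them leaves a run of the alternating automaton. Since the registers are compared
only with the datum of the current node, the identities of the data, which the counters forget, can
be chosen anew from the root downwards.
-/

/-! ### Trees -/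

namespace BTree
variable {A : Type} {t : BTree A}

theorem append_mem_nodes_iff {n : Node} {d : Bool} : n ++ [d] ∈ t.Nodes ↔ t.Nonleaf n := by
  refine ⟨?_, fun h => .inr ⟨n, d, rfl, h⟩⟩
  rintro (h | ⟨m, d', h, hm⟩)
  · simp at h
  · rwa [(List.append_inj' h rfl).1]

theorem Nonleaf.mem_nodes {n : Node} (h : t.Nonleaf n) : n ∈ t.Nodes := by
  cases n using List.reverseRecOn with
  | nil => exact .inl rfl
  | append_singleton n d => exact append_mem_nodes_iff.2 (t.tree_cond n d h)

theorem label_eq_none_of_leaf {n : Node} (h : t.Leaf n) : t.label n = none :=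
  Option.not_isSome_iff_eq_none.1 h.2

theorem Finite.finite_nodes (h : t.Finite) : t.Nodes.Finite := by
  have hchildren : (⋃ d : Bool, (· ++ [d]) '' {n | t.Nonleaf n}).Finite :=
    Set.finite_iUnion fun _ => Set.Finite.image _ h
  refine (hchildren.insert []).subset ?_
  rintro n (rfl | ⟨m, d, rfl, hm⟩)
  · exact Set.mem_insert _ _
  · exact Set.mem_insert_of_mem _ (Set.mem_iUnion_of_mem d (Set.mem_image_of_mem _ hm))

theorem exists_labelling {S : Type*} {P : Node → S → Prop} {R : Node → S → (Bool → S) → Prop}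
    (root : ∃ s, P [] s)
    (children : ∀ n s, t.Nonleaf n → P n s →
      ∃ c : Bool → S, (∀ d, P (n ++ [d]) (c d)) ∧ R n s c) :
    ∃ f : Node → S, (∀ n ∈ t.Nodes, P n (f n)) ∧
      ∀ n, t.Nonleaf n → R n (f n) fun d => f (n ++ [d]) := by
  obtain ⟨s₀, hs₀⟩ := root
  have hchildren : ∀ n s, ∃ c : Bool → S, t.Nonleaf n → P n s →
      (∀ d, P (n ++ [d]) (c d)) ∧ R n s c := by
    intro n s
    by_cases h : t.Nonleaf n ∧ P n s
    · obtain ⟨c, hc⟩ := children n s h.1 h.2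
      exact ⟨c, fun _ _ => hc⟩
    · exact ⟨fun _ => s₀, fun hn hs => absurd ⟨hn, hs⟩ h⟩
  choose c hc using hchildren
  let f : Node → S := fun n => List.reverseRecOn (motive := fun _ => S) n s₀ fun m d s => c m s d
  have f_append (n : Node) (d : Bool) : f (n ++ [d]) = c n (f n) d := by simp [f]
  have hP : ∀ n ∈ t.Nodes, P n (f n) := by
    intro n
    induction n using List.reverseRecOn with
    | nil => exact fun _ => by simpa [f] using hs₀
    | append_singleton n d ih =>
      intro hn
      have hleaf := append_mem_nodes_iff.1 hn
      rw [f_append]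
      exact (hc n (f n) hleaf (ih hleaf.mem_nodes)).1 d
  refine ⟨f, hP, fun n hn => ?_⟩
  simp only [f_append]
  exact (hc n (f n) hn (hP n hn.mem_nodes)).2

/-- The data tree obtained from `t` by placing the datum `Δ n` at every nonleaf node `n`. -/
def withData (t : BTree A) (Δ : Node → ℕ) : DataTree A where
  label := t.label
  dlabel n := (t.label n).map fun _ => Δ n
  root_nonleaf := t.root_nonleaf
  domain_eq n := by simp
  tree_cond := t.tree_cond

end BTree

/-! ### Runs of alternating automata through profiles -/

theorem PosBool.Sat.mono {Q : Type} {R R' : Bool → Bool → Set Q} (hR : ∀ d u, R d u ⊆ R' d u)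
    {φ : PosBool Q} (h : φ.Sat R) : φ.Sat R' := by
  induction φ with
  | atom q d u => exact hR d u h
  | tt => trivial
  | ff => exact h
  | and φ ψ ihφ ihψ => exact ⟨ihφ h.1, ihψ h.2⟩
  | or φ ψ ihφ ihψ => exact h.imp ihφ ihψ

/-- The profile of a datum at a node: the set of states of its threads at each child. -/
abbrev Profile (Q : Type) : Type := Bool → Set Q

/-- What a node demands of the threads in its configuration: `K same q U T` says that a thread in
state `q` is content when the node's own datum gets profile `U` and the thread's datum gets
profile `T`, where `same` tells whether these two data are equal. -/
abbrev Behaviour (Q : Type) : Type := Bool → Q → Profile Q → Profile Q → Prop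

/-- The profile of the datum `D` when the two children have configurations `H false`, `H true`. -/
def profile {Q : Type} (H : Bool → Set (Q × ℕ)) (D : ℕ) : Profile Q := fun d => {r | (r, D) ∈ H d}

namespace ATRA
variable {A : Type} (M : ATRA A)

instance : Finite M.Q := M.fin

/-- The demand made by a node with the given label; `none` stands for a leaf. -/
def behaviour : Option A → Behaviour M.Q
  | none, _, q, _, _ => q ∈ M.F
  | some a, same, q, U, T => (M.δ q a same).Sat fun d u => if u then U d else T d

theorem trans_iff {a : A} {E : ℕ} {G : Set (M.Q × ℕ)} {H : Bool → Set (M.Q × ℕ)} :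
    M.Trans a E G (H false) (H true) ↔
      ∀ q D, (q, D) ∈ G →
        M.behaviour (some a) (decide (D = E)) q (profile H E) (profile H D) := by
  have hH (d : Bool) : (if d then H true else H false) = H d := by cases d <;> rfl
  simp only [Trans, hH]
  refine forall₃_congr fun q D _ => ⟨?_, fun h => ⟨_, h, fun d => ⟨fun r hr => ?_, fun r hr => ?_⟩⟩⟩
  · rintro ⟨R, hR, hsub⟩
    refine hR.mono ?_
    rintro d (_ | _) r hr
    · exact (hsub d).2 r hr
    · exact (hsub d).1 r hr
  · simpa [profile] using hr
  · simpa [profile] using hr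

/-- The configurations `G` form a final run of `M` on the data tree `t.withData Δ`. -/
structure IsFinalRun (t : BTree A) (G : Node → Set (M.Q × ℕ)) (Δ : Node → ℕ) : Prop where
  finite : ∀ n ∈ t.Nodes, (G n).Finite
  init : (M.qI, Δ []) ∈ G []
  behaviour : ∀ n ∈ t.Nodes, ∀ q D, (q, D) ∈ G n →
    M.behaviour (t.label n) (decide (D = Δ n)) q
      (profile (fun d => G (n ++ [d])) (Δ n)) (profile (fun d => G (n ++ [d])) D)

variable {M}

theorem IsFinalRun.exists_mem_Lfin {t : BTree A} {G : Node → Set (M.Q × ℕ)} {Δ : Node → ℕ}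
    (h : M.IsFinalRun t G Δ) (ht : t.Finite) : ∃ τ ∈ M.Lfin, τ.toTree = t := by
  classical
  let ρ : M.Run (t.withData Δ) :=
    { G n := if n ∈ t.Nodes then G n else ∅
      finite n := by
        split_ifs with hn
        · exact h.finite n hn
        · exact Set.finite_empty
      support n hn := if_neg hn
      init := by
        obtain ⟨a, ha⟩ := Option.isSome_iff_exists.1 t.root_nonleaf
        exact ⟨Δ [], by simp [BTree.withData, ha], by simpa [BTree.Nodes] using h.init⟩
      step n a D ha hD := by
        have hlabel : t.label n = some a := ha
        have hleaf : t.Nonleaf n := Option.isSome_iff_exists.2 ⟨a, hlabel⟩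
        obtain rfl : Δ n = D := by simpa [BTree.withData, hlabel] using hD
        simp only [BTree.append_mem_nodes_iff, hleaf, hleaf.mem_nodes, if_true]
        exact (M.trans_iff (H := fun d => G (n ++ [d]))).2
          fun q D hq => hlabel ▸ h.behaviour n hleaf.mem_nodes q D hq }
  refine ⟨t.withData Δ, ⟨ht, ρ, fun n hn q D hq => ?_⟩, rfl⟩
  have hleaf : t.Leaf n := hn
  have hdemand := h.behaviour n hleaf.1 q D (by simpa [ρ, hleaf.1] using hq)
  rwa [BTree.label_eq_none_of_leaf hleaf] at hdemand

theorem exists_isFinalRun_of_mem_Lfin {τ : DataTree A} (hτ : τ ∈ M.Lfin) :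
    ∃ G Δ, M.IsFinalRun τ.toTree G Δ := by
  obtain ⟨-, ρ, hρ⟩ := hτ
  refine ⟨ρ.G, fun n => (τ.dlabel n).getD 0, fun n _ => ρ.finite n, ?_, fun n hn q D hq => ?_⟩
  · obtain ⟨D, hD, hq⟩ := ρ.init
    simpa [hD] using hq
  · change M.behaviour (τ.label n) _ _ _ _
    cases hlabel : τ.label n with
    | none => exact hρ n ⟨hn, by simp [DataTree.Nonleaf, hlabel]⟩ q D hq
    | some a =>
      obtain ⟨E, hE⟩ := Option.isSome_iff_exists.1 ((τ.domain_eq n).2 (by simp [hlabel]))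
      simp only [hE, Option.getD_some]
      exact M.trans_iff.1 (ρ.step n a E hlabel hE) q D hq

end ATRA

/-! ### Runs of counter automata through the ends of their blocks -/

/-- One ε-transition with incrementing errors. -/
def EpsStep {Q : Type} {k : ℕ} (δε : Set (Q × Instr k × Q)) (x y : Q × Val k) : Prop :=
  ∃ l, (x.1, l, y.1) ∈ δε ∧ StepErr l x.2 y.2

namespace ITCA
variable {A : Type} (C : ITCA A)

/-- An accepting run of `C` on `t`, recorded by the first configuration `x n` and the last
configuration `y n` of the block at each node `n`. -/
structure IsAcceptingRun (t : BTree A) (x y : Node → C.Q × Val C.k) : Prop where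
  init : x [] = (C.qI, 0)
  block : ∀ n ∈ t.Nodes, Relation.ReflTransGen (EpsStep C.δε) (x n) (y n)
  branch : ∀ n a, t.label n = some a → ∃ l,
    ((y n).1, a, l, (x (n ++ [false])).1, (x (n ++ [true])).1) ∈ C.δ ∧
      ∀ d, StepErr l (y n).2 (x (n ++ [d])).2
  final : ∀ n, t.Leaf n → (y n).1 ∈ C.F

variable {C} {t : BTree A}

theorem exists_isAcceptingRun_of_mem_Lang (ht : t ∈ C.Lang) : ∃ x y, C.IsAcceptingRun t x y := by
  obtain ⟨-, ρ, hρ⟩ := ht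
  have hlast {n : Node} (hn : n ∈ t.Nodes) :
      (ρ.B n).getLast? = some ((ρ.B n).getLast (ρ.nonempty n hn)) :=
    List.getLast?_eq_some_getLast _
  refine ⟨fun n => (ρ.B n).head?.getD (C.qI, 0), fun n => (ρ.B n).getLast?.getD (C.qI, 0),
    ?_, fun n hn => ?_, fun n a ha => ?_, fun n hn => ?_⟩
  · rw [ρ.init]
    rfl
  · have hne := ρ.nonempty n hn
    rw [List.head?_eq_some_head hne, hlast hn]
    exact List.relationReflTransGen_of_exists_isChain (ρ.B n) (ρ.block n hn) hne
  · obtain ⟨q, v, l, r₀, r₁, w₀, w₁, hy, hδ, hw₀, hw₁, hx₀, hx₁⟩ := ρ.step n a ha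
    refine ⟨l, by simpa [hy, hx₀, hx₁] using hδ, ?_⟩
    rintro (_ | _)
    · simpa [hy, hx₀] using hw₀
    · simpa [hy, hx₁] using hw₁
  · rw [hlast hn.1]
    exact hρ n hn _ _ (hlast hn.1)

theorem IsAcceptingRun.mem_Lang {x y : Node → C.Q × Val C.k} (h : C.IsAcceptingRun t x y)
    (ht : t.Finite) : t ∈ C.Lang := by
  have hblocks : ∀ n, ∃ L : List (C.Q × Val C.k), n ∈ t.Nodes →
      L ≠ [] ∧ L.IsChain (EpsStep C.δε) ∧ L.head? = some (x n) ∧ L.getLast? = some (y n) := by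
    intro n
    by_cases hn : n ∈ t.Nodes
    · obtain ⟨L, hne, hchain, hhead, hlast⟩ :=
        List.exists_isChain_ne_nil_of_relationReflTransGen (h.block n hn)
      exact ⟨L, fun _ => ⟨hne, hchain, by rw [List.head?_eq_some_head hne, hhead],
        by rw [List.getLast?_eq_some_getLast hne, hlast]⟩⟩
    · exact ⟨[], fun hn' => absurd hn' hn⟩
  choose B hB using hblocks
  let ρ : C.Run t :=
    { B := B
      nonempty n hn := (hB n hn).1
      block n hn := (hB n hn).2.1
      init := (hB [] (.inl rfl)).2.2.1.trans (congrArg some h.init)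
      step n a ha := by
        have hleaf : t.Nonleaf n := Option.isSome_iff_exists.2 ⟨a, ha⟩
        have hhead (d : Bool) : (B (n ++ [d])).head? = some (x (n ++ [d])) :=
          (hB _ (BTree.append_mem_nodes_iff.2 hleaf)).2.2.1
        obtain ⟨l, hδ, hl⟩ := h.branch n a ha
        exact ⟨_, _, l, _, _, _, _, (hB n hleaf.mem_nodes).2.2.2, hδ, hl false, hl true,
          hhead false, hhead true⟩ }
  refine ⟨ht, ρ, fun n hn q v hqv => ?_⟩
  have hy : y n = (q, v) := Option.some.inj ((hB n hn.1).2.2.2.symm.trans hqv)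
  simpa [hy] using h.final n hn

end ITCA

/-! ### Counting tokens -/

section Counters
variable {k : ℕ} {c : Fin k} {v w : Val k}

theorem stepErr_inc_iff : StepErr (.inc c) v w ↔ v + Pi.single c 1 ≤ w := by
  have hupdate (u : Val k) : Function.update u c (u c + 1) = u + Pi.single c 1 := by
    ext i
    rcases eq_or_ne i c with rfl | hi <;> simp [*]
  constructor
  · rintro ⟨u, _, hvu, rfl, huw⟩
    rw [hupdate] at huw
    exact (add_le_add_left (show v ≤ u from hvu) _).trans huw
  · exact fun h => ⟨v, _, fun _ => le_rfl, rfl, (hupdate v).trans_le h⟩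

theorem stepErr_dec_iff : StepErr (.dec c) v w ↔ v ≤ w + Pi.single c 1 := by
  constructor
  · rintro ⟨u, _, hvu, ⟨hpos, rfl⟩, huw⟩ i
    have hvi := hvu i
    have hwi := huw i
    rcases eq_or_ne i c with rfl | hi
    · simp only [Function.update_self, Pi.add_apply, Pi.single_eq_same] at hwi ⊢
      omega
    · simp only [Function.update_of_ne hi, Pi.add_apply, Pi.single_eq_of_ne hi] at hwi ⊢
      omega
  · refine fun h => ⟨_, w, h, ⟨by simp, ?_⟩, fun _ => le_rfl⟩
    ext i
    rcases eq_or_ne i c with rfl | hi <;> simp [*]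

theorem stepErr_ifz_iff : StepErr (.ifz c) v w ↔ v c = 0 ∧ v ≤ w := by
  constructor
  · rintro ⟨u, _, hvu, ⟨hu, rfl⟩, huw⟩
    exact ⟨Nat.le_zero.1 (hu ▸ hvu c), fun i => (hvu i).trans (huw i)⟩
  · exact fun h => ⟨v, v, fun _ => le_rfl, ⟨h.1, rfl⟩, h.2⟩

variable {ι : Type*} {X : Finset ι} {κ : ι → Fin k}

/-- The valuation counting, on each counter, the tokens of `X` placed there by `κ`. -/
def tokenCount (X : Finset ι) (κ : ι → Fin k) : Val k := ∑ i ∈ X, Pi.single (κ i) 1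

theorem tokenCount_apply_eq_zero_iff : tokenCount X κ c = 0 ↔ ∀ i ∈ X, κ i ≠ c := by
  simp only [tokenCount, Finset.sum_apply, Finset.sum_eq_zero_iff]
  exact forall₂_congr fun i _ => by simp [Pi.single_apply, eq_comm]

variable [DecidableEq ι]

theorem tokenCount_erase_add_single {i : ι} (hi : i ∈ X) :
    tokenCount (X.erase i) κ + Pi.single (κ i) 1 = tokenCount X κ :=
  Finset.sum_erase_add _ _ hi

theorem tokenCount_insert_update (X : Finset ι) (κ : ι → Fin k) (i : ι) (c : Fin k) :
    tokenCount (insert i X) (Function.update κ i c) =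
      tokenCount (X.erase i) κ + Pi.single c 1 := by
  rw [← tokenCount_erase_add_single (Finset.mem_insert_self i X), Finset.erase_insert_eq_erase,
    Function.update_self]
  congr 1
  refine Finset.sum_congr rfl fun j hj => ?_
  rw [Function.update_of_ne (Finset.ne_of_mem_erase hj)]

theorem tokenCount_update {i : ι} (hi : i ∈ X) (c : Fin k) :
    tokenCount X (Function.update κ i c) = tokenCount (X.erase i) κ + Pi.single c 1 := by
  rw [← tokenCount_insert_update, Finset.insert_eq_of_mem hi]

/-- The alternative covers erroneous decrements, which remove no token. -/
theorem exists_tokenCount_erase_le (h : tokenCount X κ ≤ w + Pi.single c 1) :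
    (∃ i ∈ X, κ i = c ∧ tokenCount (X.erase i) κ ≤ w) ∨
      (∀ i ∈ X, κ i ≠ c) ∧ tokenCount X κ ≤ w := by
  by_cases hc : ∃ i ∈ X, κ i = c
  · obtain ⟨i, hi, rfl⟩ := hc
    rw [← tokenCount_erase_add_single hi] at h
    exact .inl ⟨i, hi, rfl, le_of_add_le_add_right h⟩
  · push Not at hc
    refine .inr ⟨hc, fun c' => ?_⟩
    rcases eq_or_ne c' c with rfl | hne
    · simp [tokenCount_apply_eq_zero_iff.2 hc]
    · simpa [hne] using h c'

end Counters

/-! ### The simulating automaton -/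

/-- What the control state remembers while the configuration at a node is being processed: the
bank `bank` of counters holding the profiles assigned at the parent (the other bank receives the
profiles for the children), the direction `side` of the node, the guessed behaviour of the node, and
the guessed profile `current` of its datum. -/
structure Sweep (Q : Type) where
  bank : Bool
  side : Bool
  behaviour : Behaviour Q
  current : Profile Q

/-- Control states: `sweep s Z` moves data from one bank to the other, having found the counters of
the profiles in `Z` to be zero in the bank being emptied; `carry s Z T` is in the middle of a move,
about to increment the counter of `T`. -/
inductive Control (Q : Type) : Type
  | init : Control Q
  | start (bank side : Bool) : Control Q
  | sweep (s : Sweep Q) (tested : Set (Profile Q)) : Control Q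
  | carry (s : Sweep Q) (tested : Set (Profile Q)) (T : Profile Q) : Control Q

section Simulator
variable {Q : Type}

instance [Finite Q] : Finite (Sweep Q) := by
  refine Finite.of_injective (fun s => (s.bank, s.side, s.behaviour, s.current)) ?_
  rintro ⟨⟩ ⟨⟩ h
  simpa using h

instance [Finite Q] : Finite (Control Q) := by
  let code : Control Q → Unit ⊕ (Bool × Bool) ⊕ (Sweep Q × Set (Profile Q)) ⊕
      (Sweep Q × Set (Profile Q) × Profile Q)
    | .init => .inl ()
    | .start b d => .inr (.inl (b, d))
    | .sweep s Z => .inr (.inr (.inl (s, Z)))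
    | .carry s Z T => .inr (.inr (.inr (s, Z, T)))
  refine Finite.of_injective code ?_
  rintro (_ | _ | _ | _) (_ | _ | _ | _) h <;> simp_all [code]

variable [Finite Q]

/-- The counter counting, in the given bank, the data with the given profile. -/
noncomputable def counter : Bool × Profile Q ≃ Fin (Nat.card (Bool × Profile Q)) :=
  Finite.equivFin _

/-- The ε-transitions, for an automaton with initial state `q₀`. The zero test in `init` is only
there because every transition carries an instruction; the counter of the new profile of the datum
removed in `start` is incremented by the branching transition. -/
inductive EpsRule (q₀ : Q) :
    Control Q × Instr (Nat.card (Bool × Profile Q)) × Control Q → Prop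
  | init {s : Sweep Q} (c) (h : s.behaviour true q₀ s.current s.current) :
      EpsRule q₀ (.init, .ifz c, .sweep s ∅)
  | start {s : Sweep Q} {S : Profile Q}
      (h : ∀ q ∈ S s.side, s.behaviour true q s.current s.current) :
      EpsRule q₀ (.start s.bank s.side, .dec (counter (s.bank, S)), .sweep s ∅)
  | take {s : Sweep Q} {Z : Set (Profile Q)} {S T : Profile Q}
      (h : ∀ q ∈ S s.side, s.behaviour false q s.current T) :
      EpsRule q₀ (.sweep s Z, .dec (counter (s.bank, S)), .carry s Z T)
  | put {s : Sweep Q} {Z : Set (Profile Q)} {T : Profile Q} :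
      EpsRule q₀ (.carry s Z T, .inc (counter (!s.bank, T)), .sweep s Z)
  | test {s : Sweep Q} {Z : Set (Profile Q)} {S : Profile Q} :
      EpsRule q₀ (.sweep s Z, .ifz (counter (s.bank, S)), .sweep s (insert S Z))

/-- Configurations of the simulating automaton. -/
abbrev SimConf (Q : Type) : Type := Control Q × Val (Nat.card (Bool × Profile Q))

/-- The ε-steps of the automaton simulating an `ATRA` with initial state `q₀`. -/
abbrev SimStep (q₀ : Q) : SimConf Q → SimConf Q → Prop := EpsStep {p | EpsRule q₀ p}

end Simulator

/-- The counter automaton simulating `M`. -/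
noncomputable abbrev ATRA.toITCA {A : Type} (M : ATRA A) : ITCA A where
  Q := Control M.Q
  fin := inferInstance
  qI := .init
  F := {q | ∃ s : Sweep M.Q, s.behaviour = M.behaviour none ∧ q = .sweep s Set.univ}
  k := Nat.card (Bool × Profile M.Q)
  δ := {p | ∃ a, ∃ s : Sweep M.Q, s.behaviour = M.behaviour (some a) ∧
    p = (.sweep s Set.univ, a, .inc (counter (!s.bank, s.current)),
      .start (!s.bank) false, .start (!s.bank) true)}
  δε := {p | EpsRule M.qI p}

/-! ### From blocks to configurations -/

/-- For each direction, the threads of the data in `X` when `g` assigns their profiles. -/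
def threads {Q : Type} (X : Finset ℕ) (g : ℕ → Profile Q) (d : Bool) : Set (Q × ℕ) :=
  {p | p.2 ∈ X ∧ p.1 ∈ g p.2 d}

theorem finite_threads {Q : Type} [Finite Q] (X : Finset ℕ) (g : ℕ → Profile Q) (d : Bool) :
    (threads X g d).Finite :=
  (Set.finite_univ.prod X.finite_toSet).subset fun _ h => ⟨trivial, h.1⟩

theorem profile_threads {Q : Type} {X : Finset ℕ} {g : ℕ → Profile Q} {D : ℕ} (hD : D ∈ X) :
    profile (threads X g) D = g D := by
  ext d q
  simp [profile, threads, hD]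

/-- The assignment `t` of counters to the data in `X` is a possible stage in the processing of the
configuration `G` with current datum `E`: a datum in the bank of `s` still has its old profile,
one in the other bank has a new profile that its threads are content with. The current datum counts
as moved from the beginning. -/
structure Sweep.Tracks {Q : Type} (s : Sweep Q) (Z : Set (Profile Q)) (G : Set (Q × ℕ)) (E : ℕ)
    (X : Finset ℕ) (t : ℕ → Bool × Profile Q) : Prop where
  current_mem : E ∈ X
  current_eq : t E = (!s.bank, s.current)
  mem {q : Q} {D : ℕ} : (q, D) ∈ G → D ∈ X
  pending {q : Q} {D : ℕ} : (q, D) ∈ G → (t D).1 = s.bank → q ∈ (t D).2 s.side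
  moved {q : Q} {D : ℕ} : (q, D) ∈ G → (t D).1 ≠ s.bank →
    s.behaviour (decide (D = E)) q s.current (t D).2
  untested {D : ℕ} : D ∈ X → (t D).1 = s.bank → (t D).2 ∉ Z

namespace Sweep.Tracks
variable {Q : Type} {s : Sweep Q} {Z : Set (Profile Q)} {G : Set (Q × ℕ)} {E : ℕ} {X : Finset ℕ}
  {t : ℕ → Bool × Profile Q}

theorem start {g : ℕ → Profile Q} {S : Profile Q} (hE : E ∈ X → g E = S)
    (hS : ∀ q ∈ S s.side, s.behaviour true q s.current s.current) :
    s.Tracks ∅ (threads X g s.side) E (insert E X)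
      (Function.update (fun D => (s.bank, g D)) E (!s.bank, s.current)) where
  current_mem := Finset.mem_insert_self E X
  current_eq := Function.update_self ..
  mem h := Finset.mem_insert_of_mem h.1
  pending {q D} h hbank := by
    rcases eq_or_ne D E with rfl | hD
    · simp at hbank
    · simpa [hD] using h.2
  moved {q D} h hbank := by
    rcases eq_or_ne D E with rfl | hD
    · simpa using hS q (hE h.1 ▸ h.2)
    · simp [hD] at hbank
  untested _ _ := Set.notMem_empty _

theorem take (h : s.Tracks Z G E X t) {D : ℕ} {S T : Profile Q} (hD : t D = (s.bank, S))
    (hS : ∀ q ∈ S s.side, s.behaviour false q s.current T) :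
    s.Tracks Z G E X (Function.update t D (!s.bank, T)) := by
  have hDE : D ≠ E := by
    rintro rfl
    simpa [hD] using h.current_eq
  refine ⟨h.current_mem, ?_, h.mem, fun {q D'} hq hbank => ?_, fun {q D'} hq hbank => ?_,
    fun {D'} hX hbank => ?_⟩
  · rw [Function.update_of_ne hDE.symm, h.current_eq]
  · rcases eq_or_ne D' D with rfl | hD'
    · simp at hbank
    · rw [Function.update_of_ne hD'] at hbank ⊢
      exact h.pending hq hbank
  · rcases eq_or_ne D' D with rfl | hD'
    · have hqS := h.pending hq (by rw [hD])
      rw [hD] at hqS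
      simpa [hDE] using hS q hqS
    · rw [Function.update_of_ne hD'] at hbank ⊢
      exact h.moved hq hbank
  · rcases eq_or_ne D' D with rfl | hD'
    · simp at hbank
    · rw [Function.update_of_ne hD'] at hbank ⊢
      exact h.untested hX hbank

theorem insert_tested (h : s.Tracks Z G E X t) {S : Profile Q} (hS : ∀ D ∈ X, t D ≠ (s.bank, S)) :
    s.Tracks (insert S Z) G E X t where
  __ := h
  untested hD hbank := by
    rintro (hZ | hZ)
    · exact hS _ hD (Prod.ext hbank hZ)
    · exact h.untested hD hbank hZ

theorem bank_ne (h : s.Tracks Set.univ G E X t) {D : ℕ} (hD : D ∈ X) : (t D).1 ≠ s.bank :=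
  fun hbank => h.untested hD hbank trivial

end Sweep.Tracks

section Simulator
variable {Q : Type} [Finite Q] {q₀ : Q} {G : Set (Q × ℕ)} {E : ℕ}

/-- The invariant of a block. Incrementing errors only let counters exceed the number of data
they stand for; conversely the increments for the current datum and, in `carry`, for the datum
being moved are still owed. -/
def BlockInv (G : Set (Q × ℕ)) (E : ℕ) : SimConf Q → Prop
  | (.sweep s Z, v) => ∃ X t, s.Tracks Z G E X t ∧
      tokenCount X (counter ∘ t) ≤ v + Pi.single (counter (!s.bank, s.current)) 1
  | (.carry s Z T, v) => ∃ X t, s.Tracks Z G E X t ∧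
      tokenCount X (counter ∘ t) ≤
        v + Pi.single (counter (!s.bank, T)) 1 + Pi.single (counter (!s.bank, s.current)) 1
  | _ => False

theorem BlockInv.step {x y : SimConf Q} (hx : BlockInv G E x) (h : SimStep q₀ x y) :
    BlockInv G E y := by
  obtain ⟨x, v⟩ := x
  obtain ⟨y, w⟩ := y
  obtain ⟨l, hrule, hstep⟩ := h
  cases hrule with
  | init => exact hx.elim
  | start => exact hx.elim
  | @take s Z S T hS =>
    obtain ⟨X, t, ht, hcount⟩ := hx
    have hdec : tokenCount X (counter ∘ t) ≤
        w + Pi.single (counter (!s.bank, s.current)) 1 + Pi.single (counter (s.bank, S)) 1 := by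
      rw [add_right_comm]
      exact hcount.trans (add_le_add_left (stepErr_dec_iff.1 hstep) _)
    rcases exists_tokenCount_erase_le hdec with ⟨D, hD, hDS, hle⟩ | ⟨-, hle⟩
    · refine ⟨X, _, ht.take (counter.injective hDS) hS, ?_⟩
      rw [Function.comp_update, tokenCount_update hD, add_right_comm]
      exact add_le_add_left hle _
    · refine ⟨X, t, ht, ?_⟩
      rw [add_right_comm]
      exact le_add_right hle
  | put =>
    obtain ⟨X, t, ht, hcount⟩ := hx
    exact ⟨X, t, ht, hcount.trans (add_le_add_left (stepErr_inc_iff.1 hstep) _)⟩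
  | @test s Z S =>
    obtain ⟨X, t, ht, hcount⟩ := hx
    obtain ⟨hzero, hle⟩ : v (counter (s.bank, S)) = 0 ∧ v ≤ w := stepErr_ifz_iff.1 hstep
    have hcount_zero : tokenCount X (counter ∘ t) (counter (s.bank, S)) = 0 := by
      simpa [hzero, Pi.single_apply] using hcount (counter (s.bank, S))
    refine ⟨X, t, ht.insert_tested fun D hD hDS => ?_, hcount.trans (add_le_add_left hle _)⟩
    exact tokenCount_apply_eq_zero_iff.1 hcount_zero D hD (congrArg counter hDS)

theorem BlockInv.steps {x y : SimConf Q} (hx : BlockInv G E x)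
    (h : Relation.ReflTransGen (SimStep q₀) x y) : BlockInv G E y := by
  induction h with
  | refl => exact hx
  | tail _ hstep ih => exact ih.step hstep

variable {s : Sweep Q} {Z : Set (Profile Q)} {v w : Val (Nat.card (Bool × Profile Q))}

theorem BlockInv.of_init (h : Relation.ReflTransGen (SimStep q₀) (.init, v) (.sweep s Z, w)) :
    BlockInv {(q₀, 0)} 0 (.sweep s Z, w) := by
  obtain h | ⟨⟨y, u⟩, ⟨l, hrule, -⟩, h⟩ := h.cases_head
  · simp at h
  refine BlockInv.steps ?_ h
  cases hrule with
  | @init s _ hq₀ =>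
    have hthreads : threads {0} (fun _ _ => {q₀}) s.side = {(q₀, 0)} := by
      ext ⟨q, D⟩
      simp [threads, and_comm]
    have htracks := Sweep.Tracks.start (s := s) (E := 0) (X := {0}) (g := fun _ _ => {q₀})
      (S := fun _ => {q₀}) (fun _ => rfl) (by rintro q rfl; exact hq₀)
    refine ⟨_, _, hthreads ▸ htracks, ?_⟩
    rw [Function.comp_update, tokenCount_insert_update]
    exact add_le_add_left (by simp [tokenCount]) _

theorem BlockInv.exists_of_start {b d : Bool} {X : Finset ℕ} {g : ℕ → Profile Q}
    (hv : tokenCount X (fun D => counter (b, g D)) ≤ v)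
    (h : Relation.ReflTransGen (SimStep q₀) (.start b d, v) (.sweep s Z, w)) :
    ∃ E, BlockInv (threads X g d) E (.sweep s Z, w) := by
  obtain h | ⟨⟨y, u⟩, ⟨l, hrule, hstep⟩, h⟩ := h.cases_head
  · simp at h
  suffices hE : ∃ E, BlockInv (threads X g d) E (y, u) from hE.imp fun _ hE => hE.steps h
  cases hrule with
  | @start s S hS =>
    obtain ⟨E, hES, hle⟩ : ∃ E, (E ∈ X → g E = S) ∧
        tokenCount (X.erase E) (fun D => counter (s.bank, g D)) ≤ u := by
      rcases exists_tokenCount_erase_le (hv.trans (stepErr_dec_iff.1 hstep)) with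
        ⟨E, -, hES, hle⟩ | ⟨-, hle⟩
      · exact ⟨E, fun _ => by simpa using hES, hle⟩
      · obtain ⟨E, hE⟩ := Infinite.exists_notMem_finset X
        exact ⟨E, fun h => absurd h hE, by rwa [Finset.erase_eq_of_notMem hE]⟩
    refine ⟨E, _, _, Sweep.Tracks.start hES hS, ?_⟩
    rw [Function.comp_update, tokenCount_insert_update]
    exact add_le_add_left hle _

theorem BlockInv.exists_profiles (h : BlockInv G E (.sweep s Set.univ, v)) :
    ∃ (X : Finset ℕ) (g : ℕ → Profile Q),
      (∀ q D, (q, D) ∈ G → s.behaviour (decide (D = E)) q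
        (profile (threads X g) E) (profile (threads X g) D)) ∧
      tokenCount X (fun D => counter (!s.bank, g D)) ≤
        v + Pi.single (counter (!s.bank, s.current)) 1 := by
  obtain ⟨X, t, ht, hcount⟩ := h
  refine ⟨X, fun D => (t D).2, fun q D hq => ?_, le_of_eq_of_le ?_ hcount⟩
  · rw [profile_threads ht.current_mem, profile_threads (ht.mem hq), ht.current_eq]
    exact ht.moved hq (ht.bank_ne (ht.mem hq))
  · refine Finset.sum_congr rfl fun D hD => ?_
    rw [← Bool.eq_not_of_ne (ht.bank_ne hD)]
    rfl

/-! ### From configurations to blocks -/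

theorem reflTransGen_tests (hv : ∀ S, v (counter (s.bank, S)) = 0) :
    Relation.ReflTransGen (SimStep q₀) (.sweep s ∅, v) (.sweep s Set.univ, v) := by
  have htest (Z : Set (Profile Q)) (S : Profile Q) :
      SimStep q₀ (.sweep s Z, v) (.sweep s (insert S Z), v) :=
    ⟨_, EpsRule.test, stepErr_ifz_iff.2 ⟨hv S, le_rfl⟩⟩
  suffices htests : ∀ Z : Set (Profile Q), Z.Finite →
      Relation.ReflTransGen (SimStep q₀) (.sweep s ∅, v) (.sweep s Z, v) from
    htests _ Set.finite_univ
  intro Z hZ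
  induction Z, hZ using Set.Finite.induction_on with
  | empty => exact .refl
  | insert _ _ ih => exact ih.tail (htest _ _)

theorem reflTransGen_move {X : Finset ℕ} {κ : ℕ → Fin (Nat.card (Bool × Profile Q))} {D : ℕ}
    {S T : Profile Q} (hD : D ∈ X) (hκ : κ D = counter (s.bank, S))
    (hS : ∀ q ∈ S s.side, s.behaviour false q s.current T) :
    Relation.ReflTransGen (SimStep q₀) (.sweep s Z, tokenCount X κ)
      (.sweep s Z, tokenCount X (Function.update κ D (counter (!s.bank, T)))) := by
  have htake : SimStep q₀ (.sweep s Z, tokenCount X κ)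
      (.carry s Z T, tokenCount (X.erase D) κ) := by
    refine ⟨_, EpsRule.take hS, ?_⟩
    rw [stepErr_dec_iff, ← hκ, tokenCount_erase_add_single hD]
  have hput : SimStep q₀ (.carry s Z T, tokenCount (X.erase D) κ)
      (.sweep s Z, tokenCount X (Function.update κ D (counter (!s.bank, T)))) := by
    refine ⟨_, EpsRule.put, ?_⟩
    rw [stepErr_inc_iff, tokenCount_update hD]
  exact .head htake (.single hput)

theorem reflTransGen_moves {X : Finset ℕ} {g h : ℕ → Profile Q}
    (hg : ∀ D ∈ X, ∀ q ∈ g D s.side, s.behaviour false q s.current (h D)) :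
    Relation.ReflTransGen (SimStep q₀)
      (.sweep s Z, tokenCount X fun D => counter (s.bank, g D))
      (.sweep s Z, tokenCount X fun D => counter (!s.bank, h D)) := by
  set κ := fun D => counter (s.bank, g D)
  set κ' := fun D => counter (!s.bank, h D)
  have hmoves : ∀ Y ⊆ X, Relation.ReflTransGen (SimStep q₀)
      (.sweep s Z, tokenCount X κ) (.sweep s Z, tokenCount X (Y.piecewise κ' κ)) := by
    intro Y
    induction Y using Finset.induction_on with
    | empty => exact fun _ => by rw [Finset.piecewise_empty]
    | insert D Y hDY ih =>
      intro hsub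
      have hD : D ∈ X := hsub (Finset.mem_insert_self D Y)
      rw [Finset.piecewise_insert]
      exact (ih ((Finset.subset_insert D Y).trans hsub)).trans
        (reflTransGen_move hD (Finset.piecewise_eq_of_notMem _ _ _ hDY) (hg D hD))
  have hκ' : tokenCount X (X.piecewise κ' κ) = tokenCount X κ' :=
    Finset.sum_congr rfl fun D hD => by rw [Finset.piecewise_eq_of_mem _ _ _ hD]
  exact hκ' ▸ hmoves X subset_rfl

/-- The first step reaches the valuation `v` by an incrementing error. -/
theorem reflTransGen_of_init (h : s.behaviour true q₀ s.current s.current)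
    (hv : ∀ S, v (counter (s.bank, S)) = 0) :
    Relation.ReflTransGen (SimStep q₀) (.init, 0) (.sweep s Set.univ, v) := by
  have hinit : SimStep q₀ (.init, 0) (.sweep s ∅, v) :=
    ⟨_, EpsRule.init (counter (s.bank, s.current)) h,
      stepErr_ifz_iff.2 ⟨rfl, fun _ => Nat.zero_le _⟩⟩
  exact .head hinit (reflTransGen_tests hv)

theorem reflTransGen_of_start {X : Finset ℕ} {g h : ℕ → Profile Q} (hE : E ∈ X)
    (hcurrent : h E = s.current)
    (hg : ∀ D ∈ X, ∀ q ∈ g D s.side, s.behaviour (decide (D = E)) q s.current (h D)) :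
    Relation.ReflTransGen (SimStep q₀)
      (.start s.bank s.side, tokenCount X fun D => counter (s.bank, g D))
      (.sweep s Set.univ, tokenCount (X.erase E) fun D => counter (!s.bank, h D)) := by
  have hstart : SimStep q₀ (.start s.bank s.side, tokenCount X fun D => counter (s.bank, g D))
      (.sweep s ∅, tokenCount (X.erase E) fun D => counter (s.bank, g D)) := by
    refine ⟨_, EpsRule.start (S := g E) fun q hq => ?_, ?_⟩
    · simpa [hcurrent] using hg E hE q hq
    · rw [stepErr_dec_iff, tokenCount_erase_add_single hE]
  refine .head hstart
    ((reflTransGen_moves (h := h) fun D hD q hq => ?_).trans (reflTransGen_tests fun S => ?_))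
  · simpa [Finset.ne_of_mem_erase hD] using hg D (Finset.mem_of_mem_erase hD) q hq
  · exact tokenCount_apply_eq_zero_iff.2 fun D _ => by simp

end Simulator

namespace ATRA
variable {A : Type} {M : ATRA A} {t : BTree A}

theorem exists_sweep_of_isAcceptingRun {x y : Node → SimConf M.Q}
    (h : M.toITCA.IsAcceptingRun t x y) {n : Node} (hn : n ∈ t.Nodes) :
    ∃ s v, y n = (.sweep s Set.univ, v) ∧ s.behaviour = M.behaviour (t.label n) ∧
      (t.Nonleaf n → ∀ d, ∃ w, x (n ++ [d]) = (.start (!s.bank) d, w) ∧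
        v + Pi.single (counter (!s.bank, s.current)) 1 ≤ w) := by
  by_cases hleaf : t.Nonleaf n
  · obtain ⟨a, ha⟩ := Option.isSome_iff_exists.1 hleaf
    obtain ⟨l, ⟨a', s, hs, hδ⟩, hl⟩ := h.branch n a ha
    simp only [Prod.mk.injEq] at hδ
    obtain ⟨hy, rfl, rfl, hx₀, hx₁⟩ := hδ
    refine ⟨s, (y n).2, Prod.ext hy rfl, ha ▸ hs, fun _ d => ?_⟩
    have hx : (x (n ++ [d])).1 = .start (!s.bank) d := by
      cases d
      · exact hx₀
      · exact hx₁
    exact ⟨(x (n ++ [d])).2, Prod.ext hx rfl, stepErr_inc_iff.1 (hl d)⟩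
  · obtain ⟨s, hs, hy⟩ := h.final n ⟨hn, hleaf⟩
    exact ⟨s, (y n).2, Prod.ext hy rfl, BTree.label_eq_none_of_leaf ⟨hn, hleaf⟩ ▸ hs,
      fun hleaf_not => absurd hleaf_not hleaf⟩

theorem exists_profiles_of_isAcceptingRun {x y : Node → SimConf M.Q}
    (h : M.toITCA.IsAcceptingRun t x y) {n : Node} (hn : n ∈ t.Nodes) {G : Set (M.Q × ℕ)} {E : ℕ}
    (hinv : BlockInv G E (y n)) :
    ∃ X g, (∀ q D, (q, D) ∈ G → M.behaviour (t.label n) (decide (D = E)) q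
        (profile (threads X g) E) (profile (threads X g) D)) ∧
      (t.Nonleaf n → ∀ d, ∃ E', BlockInv (threads X g d) E' (y (n ++ [d]))) := by
  obtain ⟨s, v, hy, hs, hx⟩ := exists_sweep_of_isAcceptingRun h hn
  rw [hy] at hinv
  obtain ⟨X, g, hg, hcount⟩ := hinv.exists_profiles
  refine ⟨X, g, hs ▸ hg, fun hleaf d => ?_⟩
  obtain ⟨w, hxd, hvw⟩ := hx hleaf d
  have hnd : n ++ [d] ∈ t.Nodes := BTree.append_mem_nodes_iff.2 hleaf
  obtain ⟨s', v', hyd, -⟩ := exists_sweep_of_isAcceptingRun h hnd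
  have hblock := h.block (n ++ [d]) hnd
  rw [hxd, hyd] at hblock
  exact hyd ▸ BlockInv.exists_of_start (hcount.trans hvw) hblock

theorem exists_isFinalRun_of_isAcceptingRun {x y : Node → SimConf M.Q}
    (h : M.toITCA.IsAcceptingRun t x y) : ∃ G Δ, M.IsFinalRun t G Δ := by
  let P (n : Node) (p : Set (M.Q × ℕ) × ℕ) : Prop :=
    n ∈ t.Nodes ∧ p.1.Finite ∧ BlockInv p.1 p.2 (y n) ∧ (n = [] → (M.qI, p.2) ∈ p.1)
  let R (n : Node) (p : Set (M.Q × ℕ) × ℕ) (c : Bool → Set (M.Q × ℕ) × ℕ) : Prop :=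
    ∀ q D, (q, D) ∈ p.1 → M.behaviour (t.label n) (decide (D = p.2)) q
      (profile (fun d => (c d).1) p.2) (profile (fun d => (c d).1) D)
  have root : ∃ p, P [] p := by
    obtain ⟨s, w, hy, -⟩ := exists_sweep_of_isAcceptingRun h (n := []) (.inl rfl)
    have hblock := h.block [] (.inl rfl)
    rw [h.init, hy] at hblock
    exact ⟨({(M.qI, 0)}, 0), .inl rfl, Set.finite_singleton _, hy ▸ BlockInv.of_init hblock,
      fun _ => rfl⟩
  have children : ∀ n p, t.Nonleaf n → P n p →
      ∃ c : Bool → Set (M.Q × ℕ) × ℕ, (∀ d, P (n ++ [d]) (c d)) ∧ R n p c := by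
    rintro n ⟨G, E⟩ hleaf ⟨hn, -, hinv, -⟩
    obtain ⟨X, g, hg, hchildren⟩ := exists_profiles_of_isAcceptingRun h hn hinv
    choose E' hE' using hchildren hleaf
    exact ⟨fun d => (threads X g d, E' d), fun d => ⟨BTree.append_mem_nodes_iff.2 hleaf,
      finite_threads X g d, hE' d, by simp⟩, hg⟩
  obtain ⟨f, hP, hR⟩ := BTree.exists_labelling root children
  refine ⟨fun n => (f n).1, fun n => (f n).2, fun n hn => (hP n hn).2.1,
    (hP [] (.inl rfl)).2.2.2 rfl, fun n hn q D hq => ?_⟩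
  by_cases hleaf : t.Nonleaf n
  · exact hR n hleaf q D hq
  · obtain ⟨X, g, hg, -⟩ := exists_profiles_of_isAcceptingRun h hn (hP n hn).2.2.1
    have hdemand := hg q D hq
    rw [BTree.label_eq_none_of_leaf ⟨hn, hleaf⟩] at hdemand ⊢
    exact hdemand

theorem IsFinalRun.exists_isAcceptingRun {G : Node → Set (M.Q × ℕ)} {Δ : Node → ℕ}
    (h : M.IsFinalRun t G Δ) (ht : t.Finite) : ∃ x y, M.toITCA.IsAcceptingRun t x y := by
  classical
  let X : Finset ℕ := (ht.finite_nodes.image Δ).toFinset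
  have hX {n : Node} (hn : n ∈ t.Nodes) : Δ n ∈ X :=
    (ht.finite_nodes.image Δ).mem_toFinset.2 (Set.mem_image_of_mem Δ hn)
  let g (n : Node) : ℕ → Profile M.Q := profile fun d => G (n ++ [d])
  let s (n : Node) : Sweep M.Q :=
    ⟨n.length.bodd, n.getLast?.getD false, M.behaviour (t.label n), g n (Δ n)⟩
  let x (n : Node) : SimConf M.Q :=
    if n = [] then (.init, 0)
    else (.start (s n).bank (s n).side, tokenCount X fun D => counter ((s n).bank, g n.dropLast D))
  let y (n : Node) : SimConf M.Q :=
    (.sweep (s n) Set.univ, tokenCount (X.erase (Δ n)) fun D => counter (!(s n).bank, g n D))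
  have hx (n : Node) (d : Bool) : x (n ++ [d]) =
      (.start (!(s n).bank) d, tokenCount X fun D => counter (!(s n).bank, g n D)) := by
    simp [x, s]
  refine ⟨x, y, if_pos rfl, fun n hn => ?_, fun n a ha => ?_, fun n hn => ?_⟩
  · cases n using List.reverseRecOn with
    | nil =>
      refine reflTransGen_of_init ?_ fun S => tokenCount_apply_eq_zero_iff.2 fun D _ => by simp
      have hinit := h.behaviour [] hn M.qI (Δ []) h.init
      rwa [decide_eq_true rfl] at hinit
    | append_singleton n d =>
      have hs : (s (n ++ [d])).bank = !(s n).bank ∧ (s (n ++ [d])).side = d := by simp [s]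
      have hblock := reflTransGen_of_start (q₀ := M.qI) (s := s (n ++ [d])) (g := g n) (hX hn) rfl
        fun D _ q hq => h.behaviour (n ++ [d]) hn q D (by rwa [hs.2] at hq)
      rw [hx, ← hs.1]
      rwa [hs.2] at hblock
  · have hn : n ∈ t.Nodes := BTree.Nonleaf.mem_nodes (Option.isSome_iff_exists.2 ⟨a, ha⟩)
    refine ⟨.inc (counter (!(s n).bank, (s n).current)), ?_, fun d => ?_⟩
    · rw [hx, hx]
      exact ⟨a, s n, congrArg M.behaviour ha, rfl⟩
    · rw [hx, stepErr_inc_iff]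
      exact (tokenCount_erase_add_single (κ := fun D => counter (!(s n).bank, g n D)) (hX hn)).le
  · exact ⟨s n, congrArg M.behaviour (BTree.label_eq_none_of_leaf hn), rfl⟩

end ATRA

theorem atra_to_itca_general {A : Type} (M : ATRA A) :
    ∃ C : ITCA A, C.Lang = {t : BTree A | ∃ τ ∈ M.Lfin, τ.toTree = t} := by
  refine ⟨M.toITCA, Set.ext fun t => ⟨fun ht => ?_, ?_⟩⟩
  · obtain ⟨x, y, hxy⟩ := ITCA.exists_isAcceptingRun_of_mem_Lang ht
    obtain ⟨G, Δ, hG⟩ := ATRA.exists_isFinalRun_of_isAcceptingRun hxy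
    exact hG.exists_mem_Lfin ht.1
  · rintro ⟨τ, hτ, rfl⟩
    obtain ⟨G, Δ, hG⟩ := ATRA.exists_isFinalRun_of_mem_Lfin hτ
    obtain ⟨x, y, hxy⟩ := hG.exists_isAcceptingRun hτ.1
    exact hxy.mem_Lang hτ.1

/-- For every ATRA₁ `𝒜` there is an ITCA `𝒞` with
`L(𝒞) = {tree(τ) : τ ∈ L^fin(𝒜)}`. -/
theorem atra_to_itca {A : Type} [Fintype A] (M : ATRA A) :
    ∃ C : ITCA A, C.Lang = {t : BTree A | ∃ τ ∈ M.Lfin, τ.toTree = t} :=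
  atra_to_itca_general M
end

section
/- Let 𝒜₁ = ⟨Σ, Q₁, q_I¹, F₁, δ₁⟩ and 𝒜₂ = ⟨Σ, Q₂, q_I², F₂, δ₂⟩ be ATRA₁ with Q₁ and Q₂ disjoint and q_I^∩ ∉ Q₁ ∪ Q₂, and let 𝒜∩ = ⟨Σ, {q_I^∩} ∪ Q₁ ∪ Q₂, q_I^∩, F₁ ∪ (Q₂ ∖ F₂), δ∩⟩ be the intersection of 𝒜₁ and the dual 𝒜̄₂, where δ∩(q_I^∩, a, p) = δ₁(q_I¹, a, p) ∧ (dual of δ₂(q_I², a, p)), δ∩(q, a, p) = δ₁(q, a, p) for q ∈ Q₁, and δ∩(q, a, p) = dual of δ₂(q, a, p) for q ∈ Q₂ (the dual of a formula swaps ⊤ with ⊥ and ∧ with ∨). Then a data tree τ with alphabet Σ is safety-accepted by 𝒜₁ and co-safety-accepted by 𝒜̄₂ if and only if 𝒜∩ has a run on τ which is both final and Q₂-finite, where Q₂-finite means there exists l such that the configuration at each node of length at least l contains no thread whose state is in Q₂. -/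
/-- The intersection of `𝒜₁` with the dual of `𝒜₂`: a fresh initial state whose
transition formulae are conjunctions of those of the two initial states, next to
disjoint copies of `𝒜₁` and of the dual of `𝒜₂`; the final states are those of
`𝒜₁` together with the non-final states of `𝒜₂`. -/
def ATRA.inter {A : Type} (M1 M2 : ATRA A) : ATRA A where
  Q := Unit ⊕ (M1.Q ⊕ M2.Q)
  fin := by
    haveI := M1.fin; haveI := M2.fin
    infer_instance
  qI := Sum.inl ()
  F := {x | (∃ q ∈ M1.F, x = Sum.inr (Sum.inl q)) ∨ (∃ q ∉ M2.F, x = Sum.inr (Sum.inr q))}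
  δ x a p :=
    match x with
    | Sum.inl _ =>
        .and ((M1.δ M1.qI a p).map (fun q => Sum.inr (Sum.inl q)))
             (((M2.δ M2.qI a p).dual).map (fun q => Sum.inr (Sum.inr q)))
    | Sum.inr (Sum.inl q) => (M1.δ q a p).map (fun q => Sum.inr (Sum.inl q))
    | Sum.inr (Sum.inr q) => ((M2.δ q a p).dual).map (fun q => Sum.inr (Sum.inr q))

/-!
Away from the root, and up to superfluous threads in the fresh initial state, a run of `𝒜∩` is the
disjoint union of a run of `𝒜₁` and one of `𝒜̄₂`: the embeddings of the two state spaces commute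
with the transition functions and preserve and reflect finality, so taking images and preimages of
configurations turns runs into runs. Only at the root do the initial threads have to be exchanged,
and this is harmless because the initial thread of `𝒜∩` can move exactly when both component initial
threads can, while the root is not a leaf.
-/

namespace PosBool

variable {Q Q' : Type}

theorem sat_map (f : Q → Q') (R : Bool → Bool → Set Q') (φ : PosBool Q) :
    (φ.map f).Sat R ↔ φ.Sat fun d u => f ⁻¹' R d u := by
  induction φ with
  | atom q d u => exact Iff.rfl
  | tt => exact Iff.rfl
  | ff => exact Iff.rfl
  | and φ ψ ihφ ihψ => exact and_congr ihφ ihψ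
  | or φ ψ ihφ ihψ => exact or_congr ihφ ihψ

theorem Sat.mono_s16 {R S : Bool → Bool → Set Q} (hRS : ∀ d u, R d u ⊆ S d u) {φ : PosBool Q}
    (h : φ.Sat R) : φ.Sat S := by
  induction φ with
  | atom q d u => exact hRS d u h
  | tt => exact h
  | ff => exact h
  | and φ ψ ihφ ihψ => exact h.imp ihφ ihψ
  | or φ ψ ihφ ihψ => exact h.imp ihφ ihψ

end PosBool

theorem DataTree.Leaf.ne_nil {A : Type} {τ : DataTree A} {n : Node} (hn : τ.Leaf n) : n ≠ [] := by
  rintro rfl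
  exact hn.2 τ.root_nonleaf

namespace ATRA

variable {A : Type} {M N : ATRA A} {τ : DataTree A} {a : A} {D E : ℕ}

section Transitions

/-- The largest quadruple `R d u` of sets of states that the successor configurations `H0`, `H1`
allow for a thread with register value `D` at a node with datum `E`. -/
def maxQuadruple {Q : Type} (D E : ℕ) (H0 H1 : Set (Q × ℕ)) (d u : Bool) : Set Q :=
  {r | (r, if u then E else D) ∈ if d then H1 else H0}

theorem maxQuadruple_mono {Q : Type} {H0 H1 H0' H1' : Set (Q × ℕ)} (h0 : H0 ⊆ H0') (h1 : H1 ⊆ H1')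
    (d u : Bool) : maxQuadruple D E H0 H1 d u ⊆ maxQuadruple D E H0' H1' d u := by
  cases d
  exacts [fun _ hr => h0 hr, fun _ hr => h1 hr]

theorem preimage_maxQuadruple {Q Q' : Type} (f : Q → Q') (H0 H1 : Set (Q' × ℕ)) (d u : Bool) :
    f ⁻¹' maxQuadruple D E H0 H1 d u =
      maxQuadruple D E (Prod.map f id ⁻¹' H0) (Prod.map f id ⁻¹' H1) d u := by
  cases d <;> rfl

theorem sat_map_maxQuadruple {Q Q' : Type} (f : Q → Q') (H0 H1 : Set (Q' × ℕ)) (φ : PosBool Q) :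
    (φ.map f).Sat (maxQuadruple D E H0 H1) ↔
      φ.Sat (maxQuadruple D E (Prod.map f id ⁻¹' H0) (Prod.map f id ⁻¹' H1)) := by
  simp only [PosBool.sat_map, preimage_maxQuadruple]

variable {G G' H0 H1 H0' H1' : Set (M.Q × ℕ)}

theorem trans_iff_sat_maxQuadruple :
    M.Trans a E G H0 H1 ↔
      ∀ q D, (q, D) ∈ G → (M.δ q a (decide (D = E))).Sat (maxQuadruple D E H0 H1) := by
  refine ⟨fun h q D hq => ?_, fun h q D hq => ⟨_, h q D hq, fun d => ⟨fun _ => id, fun _ => id⟩⟩⟩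
  obtain ⟨R, hsat, hR⟩ := h q D hq
  refine hsat.mono_s16 fun d u r hr => ?_
  cases u
  exacts [(hR d).2 r hr, (hR d).1 r hr]

theorem trans_singleton {q : M.Q} :
    M.Trans a E {(q, D)} H0 H1 ↔
      (M.δ q a (decide (D = E))).Sat (maxQuadruple D E H0 H1) := by
  simp [trans_iff_sat_maxQuadruple]

theorem trans_union_left :
    M.Trans a E (G ∪ G') H0 H1 ↔ M.Trans a E G H0 H1 ∧ M.Trans a E G' H0 H1 := by
  simp only [Trans, Set.mem_union, or_imp, forall_and]

theorem Trans.mono_left (hG : G' ⊆ G) (h : M.Trans a E G H0 H1) : M.Trans a E G' H0 H1 :=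
  fun q D hq => h q D (hG hq)

theorem Trans.mono_right (h0 : H0 ⊆ H0') (h1 : H1 ⊆ H1') (h : M.Trans a E G H0 H1) :
    M.Trans a E G H0' H1' :=
  trans_iff_sat_maxQuadruple.2 fun q D hq =>
    (trans_iff_sat_maxQuadruple.1 h q D hq).mono_s16 (maxQuadruple_mono h0 h1)

end Transitions

section Preruns

/-- A run without the requirement that the root configuration contain the initial thread. -/
structure IsPrerun (M : ATRA A) (τ : DataTree A) (G : Node → Set (M.Q × ℕ)) : Prop where
  finite : ∀ n, (G n).Finite
  support : ∀ n, n ∉ τ.Nodes → G n = ∅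
  step : ∀ n a E, τ.label n = some a → τ.dlabel n = some E →
    M.Trans a E (G n) (G (n ++ [false])) (G (n ++ [true]))

theorem Run.isPrerun (ρ : M.Run τ) : M.IsPrerun τ ρ.G :=
  ⟨ρ.finite, ρ.support, ρ.step⟩

theorem Run.trans_initial (ρ : M.Run τ) (ha : τ.label [] = some a) (hD : τ.dlabel [] = some D) :
    M.Trans a D {(M.qI, D)} (ρ.G [false]) (ρ.G [true]) := by
  obtain ⟨D', hD', hmem⟩ := ρ.init
  obtain rfl : D' = D := Option.some.inj (hD'.symm.trans hD)
  exact (ρ.step [] a D' ha hD).mono_left (Set.singleton_subset_iff.2 hmem)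

theorem IsPrerun.union {G G' : Node → Set (M.Q × ℕ)} (hG : M.IsPrerun τ G)
    (hG' : M.IsPrerun τ G') : M.IsPrerun τ fun n => G n ∪ G' n where
  finite n := (hG.finite n).union (hG'.finite n)
  support n hn := by rw [hG.support n hn, hG'.support n hn, Set.union_empty]
  step n a E ha hE := trans_union_left.2
    ⟨(hG.step n a E ha hE).mono_right Set.subset_union_left Set.subset_union_left,
      (hG'.step n a E ha hE).mono_right Set.subset_union_right Set.subset_union_right⟩

theorem IsPrerun.exists_run {G : Node → Set (M.Q × ℕ)} (hG : M.IsPrerun τ G)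
    (hinit : ∀ a D, τ.label [] = some a → τ.dlabel [] = some D →
      M.Trans a D {(M.qI, D)} (G [false]) (G [true])) :
    ∃ ρ : M.Run τ, ∀ n ≠ [], ρ.G n = G n := by
  obtain ⟨D, hD⟩ := Option.isSome_iff_exists.1 ((τ.domain_eq []).2 τ.root_nonleaf)
  let G' : Node → Set (M.Q × ℕ) := Function.update G [] ({(M.qI, D)} ∪ G [])
  have root : G' [] = {(M.qI, D)} ∪ G [] := Function.update_self ..
  have nonroot (n : Node) (hn : n ≠ []) : G' n = G n := Function.update_of_ne hn ..
  refine ⟨⟨G', fun n => ?_, fun n hn => ?_, ⟨D, hD, root ▸ Or.inl rfl⟩, fun n a E ha hE => ?_⟩,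
    nonroot⟩
  · obtain rfl | hn := eq_or_ne n []
    · exact root ▸ (Set.finite_singleton _).union (hG.finite [])
    · exact nonroot n hn ▸ hG.finite n
  · rw [nonroot n fun h => hn (Or.inl h), hG.support n hn]
  · rw [nonroot _ (List.concat_ne_nil _ _), nonroot _ (List.concat_ne_nil _ _)]
    obtain rfl | hn := eq_or_ne n []
    · obtain rfl : D = E := Option.some.inj (hD.symm.trans hE)
      exact root ▸ trans_union_left.2 ⟨hinit a D ha hD, hG.step [] a D ha hD⟩
    · exact nonroot n hn ▸ hG.step n a E ha hE

end Preruns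

section Homomorphisms

/-- A homomorphism of automata, except that the initial state need not be preserved. -/
structure IsHom (M N : ATRA A) (f : M.Q → N.Q) : Prop where
  map_δ : ∀ q a p, N.δ (f q) a p = (M.δ q a p).map f
  map_mem_F : ∀ q, f q ∈ N.F ↔ q ∈ M.F

namespace IsHom

variable {f : M.Q → N.Q}

theorem trans_image_iff (hf : IsHom M N f) {G : Set (M.Q × ℕ)} {H0 H1 : Set (N.Q × ℕ)} :
    N.Trans a E (Prod.map f id '' G) H0 H1 ↔
      M.Trans a E G (Prod.map f id ⁻¹' H0) (Prod.map f id ⁻¹' H1) := by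
  simp only [trans_iff_sat_maxQuadruple, ← sat_map_maxQuadruple, ← hf.map_δ]
  constructor
  · exact fun h q D hq => h (f q) D ⟨(q, D), hq, rfl⟩
  · rintro h _ _ ⟨⟨q, D⟩, hq, ⟨⟩⟩
    exact h q D hq

theorem isPrerun_image (hf : IsHom M N f) {G : Node → Set (M.Q × ℕ)} (hG : M.IsPrerun τ G) :
    N.IsPrerun τ fun n => Prod.map f id '' G n where
  finite n := (hG.finite n).image _
  support n hn := by rw [hG.support n hn, Set.image_empty]
  step n a E ha hE := hf.trans_image_iff.2 <|
    (hG.step n a E ha hE).mono_right (Set.subset_preimage_image _ _) (Set.subset_preimage_image _ _)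

theorem isPrerun_preimage (hf : IsHom M N f) {G : Node → Set (N.Q × ℕ)} (hG : N.IsPrerun τ G) :
    M.IsPrerun τ fun n => Prod.map f id ⁻¹' G n where
  finite n := by
    have := M.fin
    exact (Set.finite_univ.prod ((hG.finite n).image Prod.snd)).subset
      fun x hx => ⟨Set.mem_univ _, _, hx, rfl⟩
  support n hn := by rw [hG.support n hn, Set.preimage_empty]
  step n a E ha hE := hf.trans_image_iff.1 <|
    (hG.step n a E ha hE).mono_left (Set.image_preimage_subset _ _)

theorem final_of_preimage (hf : IsHom M N f) {ρ : N.Run τ} (hρ : ρ.Final) {ρ' : M.Run τ}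
    (h : ∀ n ≠ [], ρ'.G n = Prod.map f id ⁻¹' ρ.G n) : ρ'.Final := fun n hn q D hq =>
  (hf.map_mem_F q).1 (hρ n hn (f q) D (h n hn.ne_nil ▸ hq :))

end IsHom

end Homomorphisms

section Intersection

variable (M1 M2 : ATRA A)

/-- The embedding of the states of `𝒜₁` into those of `𝒜∩`. -/
def interInl (q : M1.Q) : (M1.inter M2).Q := Sum.inr (Sum.inl q)

/-- The embedding of the states of `𝒜̄₂` into those of `𝒜∩`. -/
def interInr (q : M2.dual.Q) : (M1.inter M2).Q := Sum.inr (Sum.inr q)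

theorem isHom_interInl : IsHom M1 (M1.inter M2) (interInl M1 M2) where
  map_δ _ _ _ := rfl
  map_mem_F q := by
    refine ⟨?_, fun hq => Or.inl ⟨q, hq, rfl⟩⟩
    rintro (⟨_, hq, ⟨⟩⟩ | ⟨_, _, ⟨⟩⟩)
    exact hq

theorem isHom_interInr : IsHom M2.dual (M1.inter M2) (interInr M1 M2) where
  map_δ _ _ _ := rfl
  map_mem_F q := by
    refine ⟨?_, fun hq => Or.inr ⟨q, hq, rfl⟩⟩
    rintro (⟨_, _, ⟨⟩⟩ | ⟨_, hq, ⟨⟩⟩)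
    exact hq

variable {M1 M2}

theorem trans_inter_initial {H0 H1 : Set ((M1.inter M2).Q × ℕ)} :
    (M1.inter M2).Trans a E {((M1.inter M2).qI, D)} H0 H1 ↔
      M1.Trans a E {(M1.qI, D)}
          (Prod.map (interInl M1 M2) id ⁻¹' H0) (Prod.map (interInl M1 M2) id ⁻¹' H1) ∧
        M2.dual.Trans a E {(M2.dual.qI, D)}
          (Prod.map (interInr M1 M2) id ⁻¹' H0) (Prod.map (interInr M1 M2) id ⁻¹' H1) := by
  simp only [trans_singleton]
  exact and_congr (sat_map_maxQuadruple _ _ _ _) (sat_map_maxQuadruple _ _ _ _)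

theorem Run.exists_inter (ρ₁ : M1.Run τ) (ρ₂ : M2.dual.Run τ) :
    ∃ ρ : (M1.inter M2).Run τ, ∀ n ≠ [],
      ρ.G n = Prod.map (interInl M1 M2) id '' ρ₁.G n ∪ Prod.map (interInr M1 M2) id '' ρ₂.G n :=
  (((isHom_interInl M1 M2).isPrerun_image ρ₁.isPrerun).union
    ((isHom_interInr M1 M2).isPrerun_image ρ₂.isPrerun)).exists_run fun _ _ ha hD =>
      trans_inter_initial.2
        ⟨(ρ₁.trans_initial ha hD).mono_right
            (Set.image_subset_iff.1 Set.subset_union_left)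
            (Set.image_subset_iff.1 Set.subset_union_left),
          (ρ₂.trans_initial ha hD).mono_right
            (Set.image_subset_iff.1 Set.subset_union_right)
            (Set.image_subset_iff.1 Set.subset_union_right)⟩

theorem Run.exists_preimage_interInl (ρ : (M1.inter M2).Run τ) :
    ∃ ρ₁ : M1.Run τ, ∀ n ≠ [], ρ₁.G n = Prod.map (interInl M1 M2) id ⁻¹' ρ.G n :=
  ((isHom_interInl M1 M2).isPrerun_preimage ρ.isPrerun).exists_run fun _ _ ha hD =>
    (trans_inter_initial.1 (ρ.trans_initial ha hD)).1

theorem Run.exists_preimage_interInr (ρ : (M1.inter M2).Run τ) :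
    ∃ ρ₂ : M2.dual.Run τ, ∀ n ≠ [], ρ₂.G n = Prod.map (interInr M1 M2) id ⁻¹' ρ.G n :=
  ((isHom_interInr M1 M2).isPrerun_preimage ρ.isPrerun).exists_run fun _ _ ha hD =>
    (trans_inter_initial.1 (ρ.trans_initial ha hD)).2

theorem Run.final_inter {ρ₁ : M1.Run τ} {ρ₂ : M2.dual.Run τ} {ρ : (M1.inter M2).Run τ}
    (hρ : ∀ n ≠ [],
      ρ.G n = Prod.map (interInl M1 M2) id '' ρ₁.G n ∪ Prod.map (interInr M1 M2) id '' ρ₂.G n)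
    (h₁ : ρ₁.Final) (h₂ : ρ₂.Final) : ρ.Final := by
  intro n hn x D hx
  rw [hρ n hn.ne_nil] at hx
  obtain ⟨⟨q, D⟩, hq, ⟨⟩⟩ | ⟨⟨q, D⟩, hq, ⟨⟩⟩ := hx
  · exact ((isHom_interInl M1 M2).map_mem_F q).2 (h₁ n hn q D hq)
  · exact ((isHom_interInr M1 M2).map_mem_F q).2 (h₂ n hn q D hq)

end Intersection

end ATRA

open ATRA in
theorem inter_run_characterisation_general {A : Type} (M1 M2 : ATRA A) (τ : DataTree A) :
    (τ ∈ M1.Lsaf ∧ τ ∈ M2.dual.Lcos) ↔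
      ∃ ρ : (M1.inter M2).Run τ, ρ.Final ∧
        ∃ l : ℕ, ∀ n : Node, l ≤ n.length →
          ∀ x D, (x, D) ∈ ρ.G n → ∀ q2 : M2.Q, x ≠ Sum.inr (Sum.inr q2) := by
  have ne_nil {l : ℕ} {n : Node} (hn : l + 1 ≤ n.length) : n ≠ [] :=
    List.ne_nil_of_length_pos (by lia)
  constructor
  · rintro ⟨⟨ρ₁, hfinal₁⟩, ρ₂, hfinal₂, l, hl⟩
    obtain ⟨ρ, hρ⟩ := Run.exists_inter ρ₁ ρ₂
    refine ⟨ρ, Run.final_inter hρ hfinal₁ hfinal₂, l + 1, fun n hn x D hx q₂ => ?_⟩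
    rw [hρ n (ne_nil hn), hl n (by lia), Set.image_empty, Set.union_empty] at hx
    obtain ⟨⟨q₁, D⟩, -, ⟨⟩⟩ := hx
    exact Sum.inr_injective.ne Sum.inl_ne_inr
  · rintro ⟨ρ, hfinal, l, hl⟩
    obtain ⟨ρ₁, hρ₁⟩ := ρ.exists_preimage_interInl
    obtain ⟨ρ₂, hρ₂⟩ := ρ.exists_preimage_interInr
    refine ⟨⟨ρ₁, (isHom_interInl M1 M2).final_of_preimage hfinal hρ₁⟩,
      ρ₂, (isHom_interInr M1 M2).final_of_preimage hfinal hρ₂, l + 1, fun n hn => ?_⟩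
    rw [hρ₂ n (ne_nil hn)]
    exact Set.eq_empty_of_forall_notMem fun ⟨q, D⟩ hq => hl n (by lia) _ D hq q rfl

/-- A data tree is safety-accepted by `𝒜₁` and
co-safety-accepted by `𝒜̄₂` iff the intersection automaton has a run on it which
is final and `Q₂`-finite. -/
theorem inter_run_characterisation {A : Type} [Fintype A] (M1 M2 : ATRA A)
    (τ : DataTree A) :
    (τ ∈ M1.Lsaf ∧ τ ∈ M2.dual.Lcos) ↔
      ∃ ρ : (M1.inter M2).Run τ, ρ.Final ∧
        ∃ l : ℕ, ∀ n : Node, l ≤ n.length →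
          ∀ x D, (x, D) ∈ ρ.G n → ∀ q2 : M2.Q, x ≠ Sum.inr (Sum.inr q2) :=
  inter_run_characterisation_general M1 M2 τ
end
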